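/- arXiv:1511.09033 — 5 statements merged into one kernel-verified Lean document; each statement's English description precedes it below -/
import Mathlib

section
/- Fix b ∈ ℝ^c and consider the cross-entropy loss as a function of F ∈ ℝ^{d×c}. For any F and any direction matrix Ψ = [ψ_1,…,ψ_c] ∈ ℝ^{d×c}, the second directional derivative of L at F in direction Ψ (the Hessian quadratic form ψᵀ(∂²L/∂F∂F)ψ, where ψ is the vectorization of Ψ) equals Σ_{j=1}^{c} Σ_{j'=j+1}^{c} (ψ_j − ψ_{j'})ᵀ ( Σ_{i=1}^{n} p_i(j) p_i(j') d_i d_iᵀ ) (ψ_j − ψ_{j'}), where p_i(j) are the softmax probabilities computed at (F, b). -/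
open Matrix Finset Real

/-- Softmax cross-entropy loss `L(F, b, D, y) = -∑ i, log p_i(y_i)`. -/
noncomputable def celoss {d n c : ℕ} (D : Matrix (Fin d) (Fin n) ℝ) (y : Fin n → Fin c)
    (F : Matrix (Fin d) (Fin c) ℝ) (b : Fin c → ℝ) : ℝ :=
  -∑ i : Fin n, Real.log
    (Real.exp ((∑ u : Fin d, D u i * F u (y i)) + b (y i)) /
     ∑ j : Fin c, Real.exp ((∑ u : Fin d, D u i * F u j) + b j))

/-- Softmax probabilities `p_i(j)`. -/
noncomputable def softp {d n c : ℕ} (D : Matrix (Fin d) (Fin n) ℝ)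
    (F : Matrix (Fin d) (Fin c) ℝ) (b : Fin c → ℝ) (i : Fin n) (j : Fin c) : ℝ :=
  Real.exp ((∑ u : Fin d, D u i * F u j) + b j) /
    ∑ k : Fin c, Real.exp ((∑ u : Fin d, D u i * F u k) + b k)

/-! The loss of a sample with label `y` is `logSumExp z - z y`, where the logit vector `z` is affine
in `F`, so only `logSumExp` contributes to the second derivative. The gradient of `logSumExp` is the
softmax vector `p`, and its second derivative in a direction `s` is the variance
`∑ p s² - (∑ p s)²` of `s` under `p`; since `∑ p = 1`, Lagrange's identity turns this into
`∑_{j < k} p_j p_k (s_j - s_k)²`. -/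

section Algebra

variable {ι R : Type*} [Fintype ι]

theorem sum_sum_Ioi_mul_mul_sub_sq [CommRing R] [LinearOrder ι] [LocallyFiniteOrderTop ι]
    [LocallyFiniteOrderBot ι] (w x : ι → R) :
    ∑ j, ∑ k ∈ Ioi j, w j * w k * (x j - x k) ^ 2 =
      (∑ j, w j) * ∑ j, w j * x j ^ 2 - (∑ j, w j * x j) ^ 2 := by
  -- The summand is the symmetrization of `f`, which vanishes on the diagonal.
  let f (j k : ι) : R := w j * w k * (x k ^ 2 - x j * x k)
  have f_diag (j : ι) : f j j = 0 := by simp only [f]; ring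
  calc ∑ j, ∑ k ∈ Ioi j, w j * w k * (x j - x k) ^ 2
      = ∑ j, ∑ k ∈ Ioi j, (f k j + f j k) :=
        sum_congr rfl fun j _ => sum_congr rfl fun k _ => by simp only [f]; ring
    _ = ∑ j, ∑ k ∈ {j}ᶜ, f k j := sum_sum_Ioi_add_eq_sum_sum_off_diag f
    _ = ∑ j, ∑ k, f k j :=
        sum_congr rfl fun j _ => by rw [Fintype.sum_eq_add_sum_compl j, f_diag, zero_add]
    _ = ∑ j, ∑ k, f j k := sum_comm
    _ = ∑ j, ∑ k, (w j * (w k * x k ^ 2) - w j * x j * (w k * x k)) :=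
        sum_congr rfl fun j _ => sum_congr rfl fun k _ => by simp only [f]; ring
    _ = (∑ j, w j) * ∑ j, w j * x j ^ 2 - (∑ j, w j * x j) ^ 2 := by
        simp only [sum_sub_distrib, ← sum_mul_sum, ← sq]

theorem dotProduct_sum_smul_vecMulVec_self_mulVec {κ : Type*} [CommSemiring R] (s : Finset κ)
    (p : κ → R) (x : κ → ι → R) (v : ι → R) :
    v ⬝ᵥ ((∑ i ∈ s, p i • vecMulVec (x i) (x i)) *ᵥ v) = ∑ i ∈ s, p i * (x i ⬝ᵥ v) ^ 2 := by
  rw [sum_mulVec, dotProduct_sum]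
  refine sum_congr rfl fun i _ => ?_
  rw [smul_mulVec, vecMulVec_mulVec, dotProduct_smul, op_smul_eq_smul, dotProduct_smul,
    dotProduct_comm v, smul_eq_mul, smul_eq_mul, sq]

theorem transpose_mul_apply_sub {m n : Type*} [NonUnitalNonAssocRing R] (A : Matrix ι m R)
    (B : Matrix ι n R) (i : m) (j k : n) :
    (Aᵀ * B) i j - (Aᵀ * B) i k = (fun u => A u i) ⬝ᵥ fun u => B u j - B u k :=
  (dotProduct_sub _ _ _).symm

end Algebra

section Calculus

theorem iteratedDeriv_two_eq_of_hasDerivAt {𝕜 E : Type*} [NontriviallyNormedField 𝕜]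
    [NormedAddCommGroup E] [NormedSpace 𝕜 E] {f f' : 𝕜 → E} {f'' : E} {t : 𝕜}
    (hf : ∀ u, HasDerivAt f (f' u) u) (hf' : HasDerivAt f' f'' t) :
    iteratedDeriv 2 f t = f'' := by
  rw [iteratedDeriv_succ, iteratedDeriv_one, deriv_eq hf, hf'.deriv]

theorem hasDerivAt_add_smul {𝕜 E : Type*} [NontriviallyNormedField 𝕜]
    [NormedAddCommGroup E] [NormedSpace 𝕜 E] (a s : E) (t : 𝕜) :
    HasDerivAt (fun u : 𝕜 => a + u • s) s t := by
  simpa only [one_smul] using ((hasDerivAt_id' t).smul_const s).const_add a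

end Calculus

section Softmax

variable {ι : Type*} [Fintype ι]

/-- The log-partition function `log ∑ j, exp (z j)` of a vector of logits. -/
noncomputable def logSumExp (z : ι → ℝ) : ℝ :=
  log (∑ j, exp (z j))

/-- The probability vector with weights proportional to `exp (z j)`; it is the gradient of
`logSumExp`. -/
noncomputable def softmax (z : ι → ℝ) (j : ι) : ℝ :=
  exp (z j) / ∑ k, exp (z k)

theorem sum_exp_pos [Nonempty ι] (z : ι → ℝ) : 0 < ∑ j, exp (z j) :=
  sum_pos (fun _ _ => exp_pos _) univ_nonempty

theorem sum_softmax [Nonempty ι] (z : ι → ℝ) : ∑ j, softmax z j = 1 := by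
  simp only [softmax, ← sum_div, div_self (sum_exp_pos z).ne']

theorem softmax_eq_exp_sub_logSumExp [Nonempty ι] (z : ι → ℝ) (j : ι) :
    softmax z j = exp (z j - logSumExp z) := by
  rw [exp_sub, logSumExp, exp_log (sum_exp_pos z), softmax]

theorem log_softmax [Nonempty ι] (z : ι → ℝ) (j : ι) :
    log (softmax z j) = z j - logSumExp z := by
  rw [softmax_eq_exp_sub_logSumExp, log_exp]

variable [Nonempty ι] {z : ℝ → ι → ℝ} {z' : ι → ℝ} {t : ℝ}

theorem hasDerivAt_logSumExp (hz : HasDerivAt z z' t) :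
    HasDerivAt (fun u => logSumExp (z u)) (softmax (z t) ⬝ᵥ z') t := by
  have h_sum : HasDerivAt (fun u => ∑ j, exp (z u j)) (∑ j, exp (z t j) * z' j) t :=
    .fun_sum fun j _ => (hasDerivAt_pi.mp hz j).exp
  refine (h_sum.log (sum_exp_pos (z t)).ne').congr_deriv ?_
  simp only [dotProduct, softmax, sum_div, div_mul_eq_mul_div]

theorem hasDerivAt_softmax (hz : HasDerivAt z z' t) (j : ι) :
    HasDerivAt (fun u => softmax (z u) j)
      (softmax (z t) j * (z' j - softmax (z t) ⬝ᵥ z')) t := by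
  simp only [softmax_eq_exp_sub_logSumExp (z _) j]
  exact ((hasDerivAt_pi.mp hz j).sub (hasDerivAt_logSumExp hz)).exp

theorem hasDerivAt_softmax_dotProduct (hz : HasDerivAt z z' t) (s : ι → ℝ) :
    HasDerivAt (fun u => softmax (z u) ⬝ᵥ s)
      (∑ j, softmax (z t) j * (z' j - softmax (z t) ⬝ᵥ z') * s j) t :=
  .fun_sum fun j _ => (hasDerivAt_softmax hz j).mul_const (s j)

theorem sum_softmax_mul_sub_mul_eq_sum_sum_Ioi [LinearOrder ι] [LocallyFiniteOrderTop ι]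
    [LocallyFiniteOrderBot ι] (z s : ι → ℝ) :
    ∑ j, softmax z j * (s j - softmax z ⬝ᵥ s) * s j =
      ∑ j, ∑ k ∈ Ioi j, softmax z j * softmax z k * (s j - s k) ^ 2 := by
  rw [sum_sum_Ioi_mul_mul_sub_sq, sum_softmax, one_mul]
  calc ∑ j, softmax z j * (s j - softmax z ⬝ᵥ s) * s j
      = ∑ j, (softmax z j * s j ^ 2 - softmax z ⬝ᵥ s * (softmax z j * s j)) :=
        sum_congr rfl fun j _ => by ring
    _ = ∑ j, softmax z j * s j ^ 2 - (∑ j, softmax z j * s j) ^ 2 := by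
        rw [sum_sub_distrib, ← mul_sum, dotProduct, sq]

end Softmax

section CrossEntropy

variable {d n c : ℕ} (D : Matrix (Fin d) (Fin n) ℝ) (y : Fin n → Fin c)
  (F Ψ : Matrix (Fin d) (Fin c) ℝ) (b : Fin c → ℝ)

/-- The logits `j ↦ d_iᵀ f_j + b_j` of the `i`-th sample. -/
def logits (i : Fin n) : Fin c → ℝ :=
  (Dᵀ * F) i + b

theorem logits_add_smul (t : ℝ) (i : Fin n) :
    logits D (F + t • Ψ) b i = logits D F b i + t • (Dᵀ * Ψ) i := by
  simp only [logits, Matrix.mul_add, Matrix.mul_smul]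
  exact add_right_comm _ _ _

theorem softp_eq_softmax_logits (i : Fin n) : softp D F b i = softmax (logits D F b i) :=
  rfl

theorem celoss_eq_sum_logSumExp_sub :
    celoss D y F b = ∑ i, (logSumExp (logits D F b i) - logits D F b i (y i)) := by
  calc celoss D y F b
      = -∑ i, log (softmax (logits D F b i) (y i)) := rfl
    _ = ∑ i, (logSumExp (logits D F b i) - logits D F b i (y i)) := by
        rw [← sum_neg_distrib]
        refine sum_congr rfl fun i _ => ?_
        have : Nonempty (Fin c) := ⟨y i⟩
        rw [log_softmax, neg_sub]

theorem hasDerivAt_logits_add_smul (t : ℝ) (i : Fin n) :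
    HasDerivAt (fun u : ℝ => logits D (F + u • Ψ) b i) ((Dᵀ * Ψ) i) t := by
  simp only [logits_add_smul]
  exact hasDerivAt_add_smul _ _ t

theorem hasDerivAt_celoss_add_smul (t : ℝ) :
    HasDerivAt (fun u : ℝ => celoss D y (F + u • Ψ) b)
      (∑ i, (softp D (F + t • Ψ) b i ⬝ᵥ (Dᵀ * Ψ) i - (Dᵀ * Ψ) i (y i))) t := by
  simp only [celoss_eq_sum_logSumExp_sub, softp_eq_softmax_logits]
  refine .fun_sum fun i _ => ?_
  have : Nonempty (Fin c) := ⟨y i⟩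
  have h_logits := hasDerivAt_logits_add_smul D F Ψ b t i
  exact (hasDerivAt_logSumExp h_logits).sub (hasDerivAt_pi.mp h_logits (y i))

theorem iteratedDeriv_two_celoss_add_smul (t : ℝ) :
    iteratedDeriv 2 (fun u : ℝ => celoss D y (F + u • Ψ) b) t =
      ∑ i, ∑ j, ∑ k ∈ Ioi j, softp D (F + t • Ψ) b i j * softp D (F + t • Ψ) b i k *
        ((Dᵀ * Ψ) i j - (Dᵀ * Ψ) i k) ^ 2 := by
  refine iteratedDeriv_two_eq_of_hasDerivAt (hasDerivAt_celoss_add_smul D y F Ψ b) ?_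
  simp only [softp_eq_softmax_logits]
  refine .fun_sum fun i _ => ?_
  have : Nonempty (Fin c) := ⟨y i⟩
  rw [← sum_softmax_mul_sub_mul_eq_sum_sum_Ioi]
  exact (hasDerivAt_softmax_dotProduct (hasDerivAt_logits_add_smul D F Ψ b t i) _).sub_const _

end CrossEntropy

/-- The second directional derivative of the cross-entropy loss at `F` in direction `Ψ`
equals `∑_{j < j'} (ψ_j − ψ_{j'})ᵀ (∑_i p_i(j) p_i(j') d_i d_iᵀ) (ψ_j − ψ_{j'})`. -/
theorem multiverse_stmt2 {d n c : ℕ} (D : Matrix (Fin d) (Fin n) ℝ) (y : Fin n → Fin c)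
    (F Ψ : Matrix (Fin d) (Fin c) ℝ) (b : Fin c → ℝ) :
    iteratedDeriv 2 (fun t : ℝ => celoss D y (F + t • Ψ) b) 0 =
      ∑ j : Fin c, ∑ j' ∈ Finset.Ioi j,
        (fun u => Ψ u j - Ψ u j') ⬝ᵥ
          ((∑ i : Fin n, (softp D F b i j * softp D F b i j') •
              Matrix.vecMulVec (fun u => D u i) (fun u => D u i)) *ᵥ
            fun u => Ψ u j - Ψ u j') := by
  calc iteratedDeriv 2 (fun t : ℝ => celoss D y (F + t • Ψ) b) 0
      = ∑ i, ∑ j, ∑ k ∈ Ioi j, softp D F b i j * softp D F b i k *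
          ((Dᵀ * Ψ) i j - (Dᵀ * Ψ) i k) ^ 2 := by
        rw [iteratedDeriv_two_celoss_add_smul, zero_smul, add_zero]
    _ = ∑ j, ∑ k ∈ Ioi j, ∑ i, softp D F b i j * softp D F b i k *
          ((Dᵀ * Ψ) i j - (Dᵀ * Ψ) i k) ^ 2 := by
        rw [sum_comm]
        exact sum_congr rfl fun j _ => sum_comm
    _ = _ := by
        simp only [dotProduct_sum_smul_vecMulVec_self_mulVec, transpose_mul_apply_sub]
end

section
/- Suppose the data matrix D ∈ ℝ^{d×n} has full row rank d (equivalently K = Σ_i d_i d_iᵀ is positive definite). Then for any F ∈ ℝ^{d×c}, b ∈ ℝ^c, and any Ψ = [ψ_1,…,ψ_c] ∈ ℝ^{d×c}, the quadratic form Σ_{j=1}^{c} Σ_{j'=j+1}^{c} (ψ_j − ψ_{j'})ᵀ ( Σ_{i=1}^{n} p_i(j) p_i(j') d_i d_iᵀ ) (ψ_j − ψ_{j'}) is nonnegative, and it equals zero if and only if ψ_1 = ψ_2 = ⋯ = ψ_c. -/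
open Matrix Finset Real

/-!
Writing `X` for the matrix with columns `d_i`, each inner sum is `X W Xᴴ` with `W` a positive
diagonal matrix. Since `X Xᴴ` is positive definite, `v ↦ vᵀ X` is injective, so the congruence
`X W Xᴴ` is positive definite as well. A sum of positive definite forms evaluated at the
differences `ψ_j - ψ_j'` can only vanish if every difference does.
-/

section Gram

variable {m n R : Type*} [Fintype n]

lemma sum_smul_vecMulVec_col_star [DecidableEq n] [CommSemiring R] [Star R]
    (X : Matrix m n R) (w : n → R) :
    ∑ i, w i • vecMulVec (X.col i) (star (X.col i)) = X * diagonal w * Xᴴ := by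
  ext u v
  rw [Matrix.sum_apply, mul_apply]
  refine sum_congr rfl fun i _ => ?_
  rw [Matrix.smul_apply, vecMulVec_apply, mul_diagonal, conjTranspose_apply, smul_eq_mul,
    col_apply, Pi.star_apply, col_apply]
  ring

lemma sum_vecMulVec_col_star [NonUnitalNonAssocSemiring R] [Star R] (X : Matrix m n R) :
    ∑ i, vecMulVec (X.col i) (star (X.col i)) = X * Xᴴ := by
  ext u v
  rw [Matrix.sum_apply, mul_apply]
  rfl

lemma vecMul_injective_of_posDef_mul_conjTranspose [Fintype m] [Ring R] [PartialOrder R]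
    [StarRing R] {X : Matrix m n R} (hX : (X * Xᴴ).PosDef) :
    Function.Injective X.vecMul := by
  refine (injective_iff_map_eq_zero X.vecMulLinear).2 fun v hv => ?_
  by_contra hv0
  have hpos : 0 < star (star v) ⬝ᵥ ((X * Xᴴ) *ᵥ star v) :=
    hX.dotProduct_mulVec_pos (star_ne_zero.2 hv0)
  have hvX : v ᵥ* X = 0 := hv
  rw [star_star, dotProduct_mulVec, ← vecMul_vecMul, hvX, zero_vecMul, zero_dotProduct] at hpos
  exact hpos.false

lemma posDef_sum_smul_vecMulVec_col_star [Finite m] [CommRing R] [PartialOrder R] [StarRing R]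
    [StarOrderedRing R] [NoZeroDivisors R] {X : Matrix m n R}
    (hX : (∑ i, vecMulVec (X.col i) (star (X.col i))).PosDef) {w : n → R} (hw : ∀ i, 0 < w i) :
    (∑ i, w i • vecMulVec (X.col i) (star (X.col i))).PosDef := by
  classical
  have := Fintype.ofFinite m
  rw [sum_vecMulVec_col_star] at hX
  rw [sum_smul_vecMulVec_col_star]
  exact (PosDef.diagonal hw).mul_mul_conjTranspose_same
    (vecMul_injective_of_posDef_mul_conjTranspose hX)

end Gram

section PairwiseDifferences

variable {κ m R : Type*} [Fintype κ] [LinearOrder κ] [LocallyFiniteOrderTop κ] [Fintype m]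
  [Ring R] [PartialOrder R] [IsOrderedAddMonoid R] [StarRing R] {A : κ → κ → Matrix m m R}

lemma sum_Ioi_dotProduct_mulVec_sub_nonneg (hA : ∀ j j', j < j' → (A j j').PosSemidef)
    (ψ : κ → m → R) :
    0 ≤ ∑ j, ∑ j' ∈ Ioi j, star (ψ j - ψ j') ⬝ᵥ (A j j' *ᵥ (ψ j - ψ j')) :=
  sum_nonneg fun j _ => sum_nonneg fun j' hj' =>
    (hA j j' (mem_Ioi.1 hj')).dotProduct_mulVec_nonneg _

lemma sum_Ioi_dotProduct_mulVec_sub_eq_zero_iff (hA : ∀ j j', j < j' → (A j j').PosDef)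
    (ψ : κ → m → R) :
    ∑ j, ∑ j' ∈ Ioi j, star (ψ j - ψ j') ⬝ᵥ (A j j' *ᵥ (ψ j - ψ j')) = 0 ↔
      ∀ j j', ψ j = ψ j' := by
  have hterm : ∀ j, ∀ j' ∈ Ioi j, 0 ≤ star (ψ j - ψ j') ⬝ᵥ (A j j' *ᵥ (ψ j - ψ j')) :=
    fun j j' hj' => (hA j j' (mem_Ioi.1 hj')).posSemidef.dotProduct_mulVec_nonneg _
  constructor
  · intro hsum
    suffices hlt_eq : ∀ j j', j < j' → ψ j = ψ j' by
      have : Std.Symm fun j j' => ψ j = ψ j' := ⟨fun _ _ => Eq.symm⟩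
      exact fun j j' => (eq_or_ne j j').elim (congrArg ψ) fun hne => Pairwise.of_lt hlt_eq hne
    intro j j' hlt
    have hinner := (sum_eq_zero_iff_of_nonneg fun j _ => sum_nonneg (hterm j)).1 hsum j (mem_univ j)
    have hzero := (sum_eq_zero_iff_of_nonneg (hterm j)).1 hinner j' (mem_Ioi.2 hlt)
    by_contra hne
    exact ((hA j j' hlt).dotProduct_mulVec_pos (sub_ne_zero.2 hne)).ne' hzero
  · intro h
    refine sum_eq_zero fun j _ => sum_eq_zero fun j' _ => ?_
    rw [h j j', sub_self, mulVec_zero, dotProduct_zero]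

end PairwiseDifferences

lemma softp_pos {d n c : ℕ} (D : Matrix (Fin d) (Fin n) ℝ) (F : Matrix (Fin d) (Fin c) ℝ)
    (b : Fin c → ℝ) (i : Fin n) (j : Fin c) : 0 < softp D F b i j :=
  div_pos (exp_pos _) (sum_pos (fun _ _ => exp_pos _) ⟨j, mem_univ j⟩)

theorem multiverse_stmt4_general {m n κ R : Type*} [Fintype m] [Fintype n] [Fintype κ]
    [LinearOrder κ] [LocallyFiniteOrderTop κ] [CommRing R] [PartialOrder R] [StarRing R]
    [StarOrderedRing R] [NoZeroDivisors R] (X : Matrix m n R)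
    (hX : (∑ i, vecMulVec (X.col i) (star (X.col i))).PosDef)
    (w : n → κ → κ → R) (hw : ∀ i j j', j < j' → 0 < w i j j') (ψ : κ → m → R) :
    0 ≤ ∑ j, ∑ j' ∈ Ioi j, star (ψ j - ψ j') ⬝ᵥ
        ((∑ i, w i j j' • vecMulVec (X.col i) (star (X.col i))) *ᵥ (ψ j - ψ j')) ∧
      (∑ j, ∑ j' ∈ Ioi j, star (ψ j - ψ j') ⬝ᵥ
        ((∑ i, w i j j' • vecMulVec (X.col i) (star (X.col i))) *ᵥ (ψ j - ψ j')) = 0 ↔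
      ∀ j j', ψ j = ψ j') := by
  have hA : ∀ j j', j < j' →
      (∑ i, w i j j' • vecMulVec (X.col i) (star (X.col i))).PosDef :=
    fun j j' hlt => posDef_sum_smul_vecMulVec_col_star hX fun i => hw i j j' hlt
  exact ⟨sum_Ioi_dotProduct_mulVec_sub_nonneg (fun j j' hlt => (hA j j' hlt).posSemidef) ψ,
    sum_Ioi_dotProduct_mulVec_sub_eq_zero_iff hA ψ⟩

/-- If `K = ∑ i, d_i d_iᵀ` is positive definite, then the Hessian quadratic form
`∑_{j < j'} (ψ_j − ψ_{j'})ᵀ (∑_i p_i(j) p_i(j') d_i d_iᵀ) (ψ_j − ψ_{j'})` is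
nonnegative, and vanishes iff `ψ_1 = ⋯ = ψ_c`. -/
theorem multiverse_stmt4 {d n c : ℕ} (D : Matrix (Fin d) (Fin n) ℝ) (y : Fin n → Fin c)
    (F Ψ : Matrix (Fin d) (Fin c) ℝ) (b : Fin c → ℝ)
    (hK : ∀ v : Fin d → ℝ, v ≠ 0 →
      0 < v ⬝ᵥ ((∑ i : Fin n, Matrix.vecMulVec (fun u => D u i) (fun u => D u i)) *ᵥ v)) :
    (0 ≤ ∑ j : Fin c, ∑ j' ∈ Finset.Ioi j,
        (fun u => Ψ u j - Ψ u j') ⬝ᵥ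
          ((∑ i : Fin n, (softp D F b i j * softp D F b i j') •
              Matrix.vecMulVec (fun u => D u i) (fun u => D u i)) *ᵥ
            fun u => Ψ u j - Ψ u j')) ∧
    ((∑ j : Fin c, ∑ j' ∈ Finset.Ioi j,
        (fun u => Ψ u j - Ψ u j') ⬝ᵥ
          ((∑ i : Fin n, (softp D F b i j * softp D F b i j') •
              Matrix.vecMulVec (fun u => D u i) (fun u => D u i)) *ᵥ
            fun u => Ψ u j - Ψ u j')) = 0 ↔
      ∀ j j' : Fin c, ∀ u : Fin d, Ψ u j = Ψ u j') := by
  have hgram : (∑ i, vecMulVec (D.col i) (star (D.col i))).PosDef :=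
    .of_dotProduct_mulVec_pos
      (sum_vecMulVec_col_star D ▸ isHermitian_mul_conjTranspose_self D) hK
  simpa only [funext_iff] using! multiverse_stmt4_general D hgram
    (fun i j j' => softp D F b i j * softp D F b i j')
    (fun i j j' _ => mul_pos (softp_pos D F b i j) (softp_pos D F b i j')) Ψ.col
end

section
/- Let (F*, b*) be a global minimizer of the cross-entropy loss L(·,·,D,y), achieving the minimal value L*(D,y), and let K = Σ_{i=1}^n d_i d_iᵀ. Then for any Ψ = [ψ_1,…,ψ_c] ∈ ℝ^{d×c}, L(F* + Ψ, b*, D, y) ≤ L*(D,y) + (1/2) Σ_{j=1}^{c} Σ_{j'=j+1}^{c} (ψ_j − ψ_{j'})ᵀ K (ψ_j − ψ_{j'}). -/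
open Matrix Finset Real

/-!
For one sample with logits `z`, the increment of the cross-entropy loss under a perturbation `w` of
the logits is `log (𝔼 exp w) - w y`, where `𝔼` is the expectation under the softmax distribution of
`z`. Hoeffding's lemma bounds it by its first-order part `𝔼 w - w y` plus `(max w - min w)² / 8`,
and the squared range is one of the terms of `∑_{j < k} (w j - w k)²`. Summing over the samples with
`w = d_iᵀ Ψ` turns these squares into the quadratic form of `K`, and the first-order part vanishes
because `F*` is a critical point.
-/

section Hoeffding

variable {ι : Type*} [Fintype ι]

theorem sum_mul_exp_le_exp_of_mem_Icc {p w : ι → ℝ} {a b : ℝ} (hp : p ∈ stdSimplex ℝ ι)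
    (hw : ∀ j, w j ∈ Set.Icc a b) :
    ∑ j, p j * exp (w j) ≤ exp (p ⬝ᵥ w + (b - a) ^ 2 / 8) := by
  let _ : MeasurableSpace ι := ⊤
  let P : PMF ι := .ofFintype (fun j => ENNReal.ofReal (p j)) <| by
    rw [← ENNReal.ofReal_sum_of_nonneg fun j _ => hp.1 j, hp.2, ENNReal.ofReal_one]
  have integral_eq (f : ι → ℝ) : ∫ j, f j ∂P.toMeasure = ∑ j, p j * f j := by
    simp [PMF.integral_eq_sum, P, hp.1]
  have hoeffding : ∑ j, p j * exp (w j - p ⬝ᵥ w) ≤ exp ((b - a) ^ 2 / 8) := by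
    have h := (ProbabilityTheory.hasSubgaussianMGF_of_mem_Icc (μ := P.toMeasure)
      (measurable_from_top (f := w)).aemeasurable (.of_forall hw)).mgf_le 1
    simp only [ProbabilityTheory.mgf, integral_eq, one_mul] at h
    refine h.trans_eq (congrArg exp ?_)
    simp only [NNReal.coe_pow, NNReal.coe_div, coe_nnnorm, norm_eq_abs, NNReal.coe_ofNat, div_pow,
      sq_abs]
    ring
  calc ∑ j, p j * exp (w j)
      = exp (p ⬝ᵥ w) * ∑ j, p j * exp (w j - p ⬝ᵥ w) := by
        rw [mul_sum]
        refine sum_congr rfl fun j _ => ?_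
        rw [mul_left_comm, ← exp_add, add_sub_cancel]
    _ ≤ exp (p ⬝ᵥ w) * exp ((b - a) ^ 2 / 8) := by gcongr
    _ = exp (p ⬝ᵥ w + (b - a) ^ 2 / 8) := (exp_add _ _).symm

end Hoeffding

section SumSqDiff

variable {ι : Type*} [Fintype ι] [LinearOrder ι] [LocallyFiniteOrderTop ι]

/-- The sum of the squared differences of a vector over unordered pairs of coordinates, each pair
being counted once, as `j < k`. -/
def sumSqDiff (w : ι → ℝ) : ℝ :=
  ∑ j, ∑ k ∈ Ioi j, (w j - w k) ^ 2

theorem sumSqDiff_nonneg (w : ι → ℝ) : 0 ≤ sumSqDiff w :=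
  sum_nonneg fun _ _ => sum_nonneg fun _ _ => sq_nonneg _

theorem sumSqDiff_smul (t : ℝ) (w : ι → ℝ) : sumSqDiff (t • w) = t ^ 2 * sumSqDiff w := by
  simp only [sumSqDiff, Pi.smul_apply, smul_eq_mul, ← mul_sub, mul_pow, mul_sum]

theorem sq_sub_le_sumSqDiff (w : ι → ℝ) (j k : ι) : (w j - w k) ^ 2 ≤ sumSqDiff w := by
  wlog hjk : j < k generalizing j k
  · rcases (not_lt.mp hjk).eq_or_lt with rfl | hkj
    · simpa using sumSqDiff_nonneg w
    · rw [sub_sq_comm]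
      exact this k j hkj
  calc (w j - w k) ^ 2
      ≤ ∑ l ∈ Ioi j, (w j - w l) ^ 2 :=
        single_le_sum (f := fun l => (w j - w l) ^ 2) (fun _ _ => sq_nonneg _) (mem_Ioi.mpr hjk)
    _ ≤ sumSqDiff w :=
        single_le_sum (f := fun i => ∑ l ∈ Ioi i, (w i - w l) ^ 2)
          (fun _ _ => sum_nonneg fun _ _ => sq_nonneg _) (mem_univ j)

end SumSqDiff

section Softmax

variable {ι : Type*} [Fintype ι]

theorem softmax_pos (z : ι → ℝ) (j : ι) : 0 < softmax z j :=
  have : Nonempty ι := ⟨j⟩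
  div_pos (exp_pos _) (sum_exp_pos z)

theorem sum_softmax_mul_exp_pos [Nonempty ι] (z w : ι → ℝ) :
    0 < ∑ j, softmax z j * exp (w j) :=
  sum_pos (fun j _ => mul_pos (softmax_pos z j) (exp_pos _)) univ_nonempty

theorem softmax_mem_stdSimplex [Nonempty ι] (z : ι → ℝ) : softmax z ∈ stdSimplex ℝ ι := by
  refine ⟨fun j => (softmax_pos z j).le, ?_⟩
  simp only [softmax, ← sum_div]
  exact div_self (sum_exp_pos z).ne'

theorem softmax_add (z w : ι → ℝ) (j : ι) :
    softmax (z + w) j = softmax z j * exp (w j) / ∑ k, softmax z k * exp (w k) := by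
  have : Nonempty ι := ⟨j⟩
  have hz := (sum_exp_pos z).ne'
  simp only [softmax, Pi.add_apply, exp_add, div_mul_eq_mul_div, ← sum_div]
  field_simp

theorem neg_log_softmax_add (z w : ι → ℝ) (j : ι) :
    -log (softmax (z + w) j) =
      -log (softmax z j) + log (∑ k, softmax z k * exp (w k)) - w j := by
  have : Nonempty ι := ⟨j⟩
  rw [softmax_add, log_div (mul_pos (softmax_pos z j) (exp_pos _)).ne'
    (sum_softmax_mul_exp_pos z w).ne', log_mul (softmax_pos z j).ne' (exp_pos _).ne', log_exp]
  ring

variable [LinearOrder ι] [LocallyFiniteOrderTop ι]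

theorem log_sum_softmax_mul_exp_le [Nonempty ι] (z w : ι → ℝ) :
    log (∑ k, softmax z k * exp (w k)) ≤ softmax z ⬝ᵥ w + 1 / 8 * sumSqDiff w := by
  obtain ⟨jmin, hmin⟩ := Finite.exists_min w
  obtain ⟨jmax, hmax⟩ := Finite.exists_max w
  calc log (∑ k, softmax z k * exp (w k))
      ≤ softmax z ⬝ᵥ w + (w jmax - w jmin) ^ 2 / 8 :=
        (log_le_iff_le_exp (sum_softmax_mul_exp_pos z w)).mpr <|
          sum_mul_exp_le_exp_of_mem_Icc (softmax_mem_stdSimplex z) fun j => ⟨hmin j, hmax j⟩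
    _ ≤ softmax z ⬝ᵥ w + 1 / 8 * sumSqDiff w := by
        linarith [sq_sub_le_sumSqDiff w jmax jmin]

theorem neg_log_softmax_add_le (z w : ι → ℝ) (j : ι) :
    -log (softmax (z + w) j) ≤
      -log (softmax z j) + (softmax z - Pi.single j 1) ⬝ᵥ w + 1 / 8 * sumSqDiff w := by
  have : Nonempty ι := ⟨j⟩
  rw [neg_log_softmax_add, sub_dotProduct, single_one_dotProduct]
  linarith [log_sum_softmax_mul_exp_le z w]

end Softmax

theorem slope_eq_zero_of_isLocalMin {f : ℝ → ℝ} {a q : ℝ} (hf : IsLocalMin f 0)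
    (hle : ∀ t, f t ≤ f 0 + a * t + q * t ^ 2) : a = 0 := by
  have hmin : IsLocalMin (fun t => a * t + q * t ^ 2) 0 := by
    filter_upwards [hf] with t ht
    linarith [hle t]
  have hderiv : HasDerivAt (fun t => a * t + q * t ^ 2) a 0 := by
    simpa using ((hasDerivAt_id' (0 : ℝ)).const_mul a).fun_add
      ((hasDerivAt_pow 2 (0 : ℝ)).const_mul q)
  exact hmin.hasDerivAt_eq_zero hderiv

section QuadraticForm

variable {m ι : Type*} [Fintype m] [Fintype ι]

theorem dotProduct_sum_vecMulVec_mulVec {R : Type*} [CommSemiring R] (D : Matrix m ι R)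
    (v : m → R) :
    v ⬝ᵥ ((∑ i, vecMulVec (fun u => D u i) (fun u => D u i)) *ᵥ v) = ∑ i, (Dᵀ i ⬝ᵥ v) ^ 2 := by
  simp only [sum_mulVec, dotProduct_sum, vecMulVec_mulVec, dotProduct_smul, op_smul_eq_smul,
    smul_eq_mul]
  refine sum_congr rfl fun i _ => ?_
  rw [dotProduct_comm v, sq]
  rfl

variable {κ : Type*} [Fintype κ] [LinearOrder κ] [LocallyFiniteOrderTop κ]

theorem sum_quadraticForm_sub_eq_sum_sumSqDiff (D : Matrix m ι ℝ) (Ψ : Matrix m κ ℝ) :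
    ∑ j, ∑ k ∈ Ioi j, (fun u => Ψ u j - Ψ u k) ⬝ᵥ
        ((∑ i, vecMulVec (fun u => D u i) (fun u => D u i)) *ᵥ fun u => Ψ u j - Ψ u k) =
      ∑ i, sumSqDiff (Dᵀ i ᵥ* Ψ) := by
  have dotProduct_sub_col (i : ι) (j k : κ) :
      Dᵀ i ⬝ᵥ (fun u => Ψ u j - Ψ u k) = (Dᵀ i ᵥ* Ψ) j - (Dᵀ i ᵥ* Ψ) k :=
    dotProduct_sub (Dᵀ i) (Ψ.col j) (Ψ.col k)
  simp only [dotProduct_sum_vecMulVec_mulVec, dotProduct_sub_col, sumSqDiff]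
  rw [sum_comm]
  exact sum_congr rfl fun j _ => sum_comm

theorem sum_quadraticForm_sub_nonneg (D : Matrix m ι ℝ) (Ψ : Matrix m κ ℝ) :
    0 ≤ ∑ j, ∑ k ∈ Ioi j, (fun u => Ψ u j - Ψ u k) ⬝ᵥ
        ((∑ i, vecMulVec (fun u => D u i) (fun u => D u i)) *ᵥ fun u => Ψ u j - Ψ u k) := by
  rw [sum_quadraticForm_sub_eq_sum_sumSqDiff]
  exact sum_nonneg fun i _ => sumSqDiff_nonneg _

end QuadraticForm

section CrossEntropy

variable {d n c : ℕ} (D : Matrix (Fin d) (Fin n) ℝ) (y : Fin n → Fin c)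
  (F : Matrix (Fin d) (Fin c) ℝ) (b : Fin c → ℝ)

theorem celoss_eq_sum_neg_log_softmax :
    celoss D y F b = ∑ i, -log (softmax (Dᵀ i ᵥ* F + b) (y i)) :=
  -- `∑ u, D u i * F u j + b j` is definitionally `(Dᵀ i ᵥ* F + b) j`.
  (sum_neg_distrib _).symm

/-- The derivative at `F` in the direction `Ψ` of the loss as a function of the classifier matrix:
the gradient of the loss of a sample with respect to its logits is its softmax distribution minus
the indicator of its label. -/
noncomputable def celossSlope (Ψ : Matrix (Fin d) (Fin c) ℝ) : ℝ :=
  ∑ i, (softmax (Dᵀ i ᵥ* F + b) - Pi.single (y i) 1) ⬝ᵥ (Dᵀ i ᵥ* Ψ)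

theorem celossSlope_smul (t : ℝ) (Ψ : Matrix (Fin d) (Fin c) ℝ) :
    celossSlope D y F b (t • Ψ) = t * celossSlope D y F b Ψ := by
  simp only [celossSlope, vecMul_smul, dotProduct_smul, smul_eq_mul, mul_sum]

theorem celoss_add_le (Ψ : Matrix (Fin d) (Fin c) ℝ) :
    celoss D y (F + Ψ) b ≤
      celoss D y F b + celossSlope D y F b Ψ + 1 / 8 * ∑ i, sumSqDiff (Dᵀ i ᵥ* Ψ) := by
  simp only [celoss_eq_sum_neg_log_softmax, celossSlope, mul_sum, ← sum_add_distrib, vecMul_add,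
    add_right_comm _ _ b]
  exact sum_le_sum fun i _ => neg_log_softmax_add_le _ _ _

variable {D y F b}

theorem celossSlope_eq_zero_of_isLocalMin (hmin : IsLocalMin (fun G => celoss D y G b) F)
    (Ψ : Matrix (Fin d) (Fin c) ℝ) : celossSlope D y F b Ψ = 0 := by
  have hline : IsLocalMin (fun t : ℝ => celoss D y (F + t • Ψ) b) 0 := by
    exact IsLocalMin.comp_continuous (f := fun G => celoss D y G b) (g := fun t : ℝ => F + t • Ψ)
      (by simpa using hmin) (by fun_prop)
  refine slope_eq_zero_of_isLocalMin (q := 1 / 8 * ∑ i, sumSqDiff (Dᵀ i ᵥ* Ψ)) hline fun t => ?_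
  have h := celoss_add_le D y F b (t • Ψ)
  simp only [celossSlope_smul, vecMul_smul, sumSqDiff_smul, ← mul_sum] at h
  rw [zero_smul, add_zero]
  linarith

end CrossEntropy

theorem multiverse_stmt7_general {d n c : ℕ} {D : Matrix (Fin d) (Fin n) ℝ} {y : Fin n → Fin c}
    {F : Matrix (Fin d) (Fin c) ℝ} {b : Fin c → ℝ}
    (hmin : IsLocalMin (fun G => celoss D y G b) F) (Ψ : Matrix (Fin d) (Fin c) ℝ) :
    celoss D y (F + Ψ) b ≤ celoss D y F b +
      (1 / 8 : ℝ) * ∑ j : Fin c, ∑ j' ∈ Finset.Ioi j,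
        (fun u => Ψ u j - Ψ u j') ⬝ᵥ
          ((∑ i : Fin n, Matrix.vecMulVec (fun u => D u i) (fun u => D u i)) *ᵥ
            fun u => Ψ u j - Ψ u j') := by
  simpa only [celossSlope_eq_zero_of_isLocalMin hmin, add_zero,
    sum_quadraticForm_sub_eq_sum_sumSqDiff] using celoss_add_le D y F b Ψ

/-- If `(F*, b*)` is a global minimizer achieving `L*(D,y)`, then for any perturbation `Ψ`,
`L(F* + Ψ, b*, D, y) ≤ L*(D,y) + ½ ∑_{j < j'} (ψ_j − ψ_{j'})ᵀ K (ψ_j − ψ_{j'})`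
where `K = ∑ i, d_i d_iᵀ`. -/
theorem multiverse_stmt7 {d n c : ℕ} (D : Matrix (Fin d) (Fin n) ℝ) (y : Fin n → Fin c)
    (Fstar : Matrix (Fin d) (Fin c) ℝ) (bstar : Fin c → ℝ)
    (hmin : ∀ (F : Matrix (Fin d) (Fin c) ℝ) (b : Fin c → ℝ),
      celoss D y Fstar bstar ≤ celoss D y F b)
    (Ψ : Matrix (Fin d) (Fin c) ℝ) :
    celoss D y (Fstar + Ψ) bstar ≤ celoss D y Fstar bstar +
      (1 / 2 : ℝ) * ∑ j : Fin c, ∑ j' ∈ Finset.Ioi j,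
        (fun u => Ψ u j - Ψ u j') ⬝ᵥ
          ((∑ i : Fin n, Matrix.vecMulVec (fun u => D u i) (fun u => D u i)) *ᵥ
            fun u => Ψ u j - Ψ u j') := by
  linarith [multiverse_stmt7_general (.of_forall fun F => hmin F bstar) Ψ,
    sum_quadraticForm_sub_nonneg D Ψ]
end

section
/- Under the construction of the preceding theorem (F^r with columns f^r_j = f¹_j + Σ_{l=1}^{m−1} α_{jlr} v_{d−l+1} built from a global minimizer (F¹, b¹) using orthonormal eigenvectors v_{d−l+1} of K for its m−1 smallest eigenvalues, with α_{jl1} = 0 and the columnwise orthogonality f^r_jᵀ f^s_j = 0 for r ≠ s): if the m−1 smallest eigenvalues of K all vanish, λ_{d−m+2} = ⋯ = λ_d = 0, then Σ_{r=1}^{m} L(F^r, b¹, D, y) = m·L*(D,y); i.e., each (F^r, b¹) is itself a global minimizer of the cross-entropy loss. -/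
open Matrix Finset Real

/-- The index `d - l + 1` (1-based) of the `l`-th smallest eigenvalue, as an index into
`Fin d` for eigenvalues sorted in decreasing order. -/
def smallIdx {d m : ℕ} (hd : 0 < d) (l : Fin (m - 1)) : Fin d :=
  ⟨d - 1 - (l : ℕ), by omega⟩

/-!
The loss depends on `F` only through the logits `Dᵀ * F`. Since `‖Dᵀ v‖² = vᵀ K v` for
`K = D * Dᵀ`, the kernel of `K` is the kernel of `Dᵀ`, so adding to the columns of `F` combinations
of eigenvectors of `K` with eigenvalue zero leaves every logit, and hence the loss, unchanged.
-/

section MatrixLemmas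

variable {m n p κ R : Type*}

theorem mul_eq_sum_vecMulVec_col_row [Fintype n] [NonUnitalNonAssocSemiring R]
    (A : Matrix m n R) (B : Matrix n p R) :
    A * B = ∑ i, vecMulVec (A.col i) (B.row i) := by
  ext u v
  simp only [mul_apply, Matrix.sum_apply, vecMulVec_apply, col_apply, row_apply]

theorem self_mul_conjTranspose_mul_eq_mul_iff [Fintype m] [Fintype n] [NonUnitalRing R]
    [PartialOrder R] [StarRing R] [StarOrderedRing R] [NoZeroDivisors R]
    (A : Matrix m n R) (B C : Matrix m p R) :
    A * Aᴴ * B = A * Aᴴ * C ↔ Aᴴ * B = Aᴴ * C := by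
  rw [← sub_eq_zero, ← Matrix.mul_sub, self_mul_conjTranspose_mul_eq_zero, Matrix.mul_sub,
    sub_eq_zero]

theorem mul_eq_mul_of_eq_add_sum [Fintype n] [Fintype κ] [CommSemiring R]
    {A : Matrix m n R} {v : κ → n → R} (hv : ∀ l, A *ᵥ v l = 0)
    {a : p → κ → R} {B C : Matrix n p R} (hB : ∀ u j, B u j = C u j + ∑ l, a j l * v l u) :
    A * B = A * C := by
  refine ext_col fun j => ?_
  have hcol : B.col j = C.col j + ∑ l, a j l • v l := by
    ext u
    simp only [col_apply, hB, Pi.add_apply, Finset.sum_apply, Pi.smul_apply, smul_eq_mul]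
  calc
    A *ᵥ B.col j = A *ᵥ C.col j + ∑ l, a j l • A *ᵥ v l := by
      simp only [hcol, mulVec_add, mulVec_sum, mulVec_smul]
    _ = A *ᵥ C.col j := by simp only [hv, smul_zero, Finset.sum_const_zero, add_zero]

end MatrixLemmas

section CrossEntropy

variable {d n c : ℕ} {D : Matrix (Fin d) (Fin n) ℝ} {F G : Matrix (Fin d) (Fin c) ℝ}

theorem celoss_eq_of_transpose_mul_eq (h : Dᵀ * F = Dᵀ * G) (y : Fin n → Fin c)
    (b : Fin c → ℝ) : celoss D y F b = celoss D y G b := by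
  have hlogit : ∀ i j, ∑ u, D u i * F u j = ∑ u, D u i * G u j := fun i j => congr_fun₂ h i j
  simp only [celoss, hlogit]

theorem celoss_eq_of_sum_vecMulVec_mul_eq
    (h : (∑ i, vecMulVec (fun u => D u i) (fun u => D u i)) * F =
      (∑ i, vecMulVec (fun u => D u i) (fun u => D u i)) * G)
    (y : Fin n → Fin c) (b : Fin c → ℝ) : celoss D y F b = celoss D y G b := by
  have hK : ∑ i, vecMulVec (fun u => D u i) (fun u => D u i) = D * Dᴴ :=
    (mul_eq_sum_vecMulVec_col_row D Dᴴ).symm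
  rw [hK, self_mul_conjTranspose_mul_eq_mul_iff, conjTranspose_eq_transpose_of_trivial] at h
  exact celoss_eq_of_transpose_mul_eq h y b

end CrossEntropy

theorem multiverse_stmt10_general {d n c : ℕ} {ι : Type*} [Fintype ι]
    (D : Matrix (Fin d) (Fin n) ℝ) (y : Fin n → Fin c)
    (F1 : Matrix (Fin d) (Fin c) ℝ) (b1 : Fin c → ℝ)
    (hmin : ∀ (F : Matrix (Fin d) (Fin c) ℝ) (b : Fin c → ℝ),
      celoss D y F1 b1 ≤ celoss D y F b)
    (F : ι → Matrix (Fin d) (Fin c) ℝ)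
    (hF : ∀ r, (∑ i, vecMulVec (fun u => D u i) (fun u => D u i)) * F r =
      (∑ i, vecMulVec (fun u => D u i) (fun u => D u i)) * F1) :
    (∑ r, celoss D y (F r) b1 = (Fintype.card ι : ℝ) * celoss D y F1 b1) ∧
    (∀ r, ∀ (F' : Matrix (Fin d) (Fin c) ℝ) (b' : Fin c → ℝ),
      celoss D y (F r) b1 ≤ celoss D y F' b') := by
  have hloss : ∀ r, celoss D y (F r) b1 = celoss D y F1 b1 := fun r =>
    celoss_eq_of_sum_vecMulVec_mul_eq (hF r) y b1
  refine ⟨?_, fun r F' b' => (hloss r).trans_le (hmin F' b')⟩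
  simp only [hloss, sum_const, card_univ, nsmul_eq_mul]

/-- If, in the multiverse construction, the `m-1` smallest eigenvalues of `K` all vanish,
then `∑_r L(F^r, b¹, D, y) = m·L*(D,y)`, and each `(F^r, b¹)` is itself a global
minimizer of the cross-entropy loss. -/
theorem multiverse_stmt10 {d n c m : ℕ} (hd : 0 < d) (hm : 0 < m) (hmd : m - 1 ≤ d)
    (D : Matrix (Fin d) (Fin n) ℝ) (y : Fin n → Fin c)
    (F1 : Matrix (Fin d) (Fin c) ℝ) (b1 : Fin c → ℝ)
    (hmin : ∀ (F : Matrix (Fin d) (Fin c) ℝ) (b : Fin c → ℝ),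
      celoss D y F1 b1 ≤ celoss D y F b)
    (w : Fin d → Fin d → ℝ) (μ : Fin d → ℝ)
    (horthw : ∀ k k' : Fin d, (∑ u : Fin d, w k u * w k' u) = if k = k' then 1 else 0)
    (heig : ∀ k : Fin d,
      (∑ i : Fin n, Matrix.vecMulVec (fun u => D u i) (fun u => D u i)) *ᵥ w k = μ k • w k)
    (hsorted : ∀ k k' : Fin d, k ≤ k' → μ k' ≤ μ k)
    (α : Fin c → Fin (m - 1) → Fin m → ℝ)
    (hα1 : ∀ (j : Fin c) (l : Fin (m - 1)), α j l ⟨0, hm⟩ = 0)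
    (F : Fin m → Matrix (Fin d) (Fin c) ℝ)
    (hF : ∀ (r : Fin m) (u : Fin d) (j : Fin c),
      F r u j = F1 u j + ∑ l : Fin (m - 1), α j l r * w (smallIdx hd l) u)
    (horthF : ∀ (j : Fin c) (r s : Fin m), r ≠ s →
      (∑ u : Fin d, F r u j * F s u j) = 0)
    -- the `m-1` smallest eigenvalues of `K` all vanish
    (hzero : ∀ l : Fin (m - 1), μ (smallIdx hd l) = 0) :
    (∑ r : Fin m, celoss D y (F r) b1 = (m : ℝ) * celoss D y F1 b1) ∧
    (∀ r : Fin m, ∀ (F' : Matrix (Fin d) (Fin c) ℝ) (b' : Fin c → ℝ),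
      celoss D y (F r) b1 ≤ celoss D y F' b') := by
  simpa only [Fintype.card_fin] using multiverse_stmt10_general D y F1 b1 hmin F fun r =>
    mul_eq_mul_of_eq_add_sum (fun l => by rw [heig, hzero, zero_smul]) (hF r)
end

section
/- Let S_b and S_w be symmetric positive definite d×d matrices and let f¹,…,f^m ∈ ℝ^d be nonzero vectors that are S_w-orthogonal, i.e., f^{r}ᵀ S_w f^{s} = 0 for all r ≠ s. Suppose there is θ > 0 such that the Fisher ratio σ(f^r, S_b, S_w) = (f^{r}ᵀ S_b f^r)/(f^{r}ᵀ S_w f^r) ≥ θ for every r ∈ {1,…,m}. Then the sum of the Fisher spectrum satisfies Σ_{k=1}^{d} γ_k = tr(S_w^{-1} S_b) ≥ √m · θ, where γ_1,…,γ_d are the eigenvalues of S_b^{1/2} S_w^{-1} S_b^{1/2} (equivalently, the generalized eigenvalues of the pair (S_b, S_w)). -/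
open Matrix Finset Real

/-!
Let `F` be the matrix with columns `f r`. The block matrix with diagonal blocks `Fᴴ Sw F`, `Sw⁻¹`
and off-diagonal blocks `Fᴴ`, `F` has Schur complement `0` with respect to `Sw⁻¹`, so it is positive
semidefinite. Its other Schur complement is then positive semidefinite too, which is the matrix form
of Bessel's inequality, `F (Fᴴ Sw F)⁻¹ Fᴴ ≤ Sw⁻¹`. Taking the trace against `Sb` gives
`tr ((Fᴴ Sw F)⁻¹ (Fᴴ Sb F)) ≤ tr (Sw⁻¹ Sb)`. When the `f r` are `Sw`-orthogonal, `Fᴴ Sw F` is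
diagonal and the left-hand side is the sum of the Fisher ratios, hence at least `m θ ≥ √m θ`.
-/

section MatrixBessel

open scoped ComplexOrder

variable {n ι 𝕜 : Type*} [Fintype n] [RCLike 𝕜]

open scoped MatrixOrder Matrix.Norms.L2Operator in
theorem trace_mul_nonneg_of_posSemidef {A B : Matrix n n 𝕜} (hA : A.PosSemidef)
    (hB : B.PosSemidef) : 0 ≤ (A * B).trace := by
  classical
  obtain ⟨C, rfl⟩ := CStarAlgebra.nonneg_iff_eq_star_mul_self.mp hB.nonneg
  rw [star_eq_conjTranspose, ← Matrix.mul_assoc, trace_mul_comm, ← Matrix.mul_assoc]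
  exact (hA.mul_mul_conjTranspose_same C).trace_nonneg

variable [DecidableEq n] [Fintype ι] [DecidableEq ι]

theorem posSemidef_inv_sub_mul_inv_mul_conjTranspose {K : Type*} [Field K] [PartialOrder K]
    [StarRing K] [StarOrderedRing K] {S : Matrix n n K} {F : Matrix n ι K}
    (hS : S.PosDef) (hG : (Fᴴ * S * F).PosDef) :
    (S⁻¹ - F * (Fᴴ * S * F)⁻¹ * Fᴴ).PosSemidef := by
  let := hS.inv.isUnit.invertible
  let := hG.isUnit.invertible
  have hblock : (fromBlocks (Fᴴ * S * F) Fᴴ Fᴴᴴ S⁻¹).PosSemidef := by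
    rw [hS.inv.fromBlocks₂₂, nonsing_inv_nonsing_inv _ (S.isUnit_iff_isUnit_det.1 hS.isUnit),
      conjTranspose_conjTranspose, sub_self]
    exact .zero
  rw [hG.fromBlocks₁₁ Fᴴ S⁻¹, conjTranspose_conjTranspose] at hblock
  exact hblock

theorem trace_inv_mul_conjTranspose_mul_mul_le {A S : Matrix n n 𝕜} {F : Matrix n ι 𝕜}
    (hA : A.PosSemidef) (hS : S.PosDef) (hG : (Fᴴ * S * F).PosDef) :
    ((Fᴴ * S * F)⁻¹ * (Fᴴ * A * F)).trace ≤ (S⁻¹ * A).trace := by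
  have htrace := trace_mul_nonneg_of_posSemidef
    (posSemidef_inv_sub_mul_inv_mul_conjTranspose hS hG) hA
  rw [Matrix.sub_mul, trace_sub, sub_nonneg] at htrace
  calc ((Fᴴ * S * F)⁻¹ * (Fᴴ * A * F)).trace
      = (F * ((Fᴴ * S * F)⁻¹ * (Fᴴ * A))).trace := by
        rw [trace_mul_comm F]; simp only [Matrix.mul_assoc]
    _ = (F * (Fᴴ * S * F)⁻¹ * Fᴴ * A).trace := by simp only [Matrix.mul_assoc]
    _ ≤ (S⁻¹ * A).trace := htrace

end MatrixBessel

section GramEntries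

variable {n ι R : Type*} [Fintype n] [NonUnitalSemiring R] [Star R]

theorem conjTranspose_mul_mul_transpose_of_apply (A : Matrix n n R) (f : ι → n → R) (r s : ι) :
    ((of f)ᵀᴴ * A * (of f)ᵀ) r s = star (f r) ⬝ᵥ (A *ᵥ f s) := by
  rw [Matrix.mul_assoc]
  rfl

theorem conjTranspose_mul_mul_transpose_of_eq_diagonal [DecidableEq ι] {S : Matrix n n R}
    {f : ι → n → R} (horth : Pairwise fun r s => star (f r) ⬝ᵥ (S *ᵥ f s) = 0) :
    (of f)ᵀᴴ * S * (of f)ᵀ = diagonal fun r => star (f r) ⬝ᵥ (S *ᵥ f r) := by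
  ext r s
  rw [conjTranspose_mul_mul_transpose_of_apply, diagonal_apply]
  split_ifs with hrs
  · rw [hrs]
  · exact horth hrs

end GramEntries

section FisherRatio

open scoped ComplexOrder

variable {n ι 𝕜 : Type*} [Fintype n] [RCLike 𝕜]

/-- The Fisher ratio `σ(v, Sb, Sw) = (vᴴ Sb v) / (vᴴ Sw v)` of a vector `v`, as an element of `𝕜`;
it takes the value `0` if the denominator vanishes. -/
noncomputable def fisherRatio (Sb Sw : Matrix n n 𝕜) (v : n → 𝕜) : 𝕜 :=
  (star v ⬝ᵥ (Sb *ᵥ v)) / (star v ⬝ᵥ (Sw *ᵥ v))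

variable [DecidableEq n] [Fintype ι] {Sb Sw : Matrix n n 𝕜} {f : ι → n → 𝕜}

theorem sum_fisherRatio_le_trace_inv_mul (hSb : Sb.PosSemidef) (hSw : Sw.PosDef)
    (hf : ∀ r, f r ≠ 0) (horth : Pairwise fun r s => star (f r) ⬝ᵥ (Sw *ᵥ f s) = 0) :
    ∑ r, fisherRatio Sb Sw (f r) ≤ (Sw⁻¹ * Sb).trace := by
  classical
  have hpos (r : ι) : 0 < star (f r) ⬝ᵥ (Sw *ᵥ f r) := hSw.dotProduct_mulVec_pos (hf r)
  have hG := conjTranspose_mul_mul_transpose_of_eq_diagonal horth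
  have hGinv : (diagonal fun r => star (f r) ⬝ᵥ (Sw *ᵥ f r))⁻¹ =
      diagonal fun r => (star (f r) ⬝ᵥ (Sw *ᵥ f r))⁻¹ :=
    inv_eq_left_inv <| by simp [(hpos _).ne']
  have hbessel := trace_inv_mul_conjTranspose_mul_mul_le (F := (of f)ᵀ) hSb hSw
    (hG ▸ .diagonal hpos)
  rw [hG, hGinv] at hbessel
  simpa only [fisherRatio, trace, diag_apply, diagonal_mul,
    conjTranspose_mul_mul_transpose_of_apply, ← div_eq_inv_mul] using hbessel

theorem multiverse_stmt14_general (hSb : Sb.PosSemidef) (hSw : Sw.PosDef)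
    (hf : ∀ r, f r ≠ 0) (horth : Pairwise fun r s => star (f r) ⬝ᵥ (Sw *ᵥ f s) = 0)
    {θ : 𝕜} (hfish : ∀ r, θ ≤ fisherRatio Sb Sw (f r)) :
    Fintype.card ι * θ ≤ (Sw⁻¹ * Sb).trace :=
  calc (Fintype.card ι : 𝕜) * θ = ∑ _r : ι, θ := by simp
    _ ≤ ∑ r, fisherRatio Sb Sw (f r) := sum_le_sum fun r _ => hfish r
    _ ≤ (Sw⁻¹ * Sb).trace := sum_fisherRatio_le_trace_inv_mul hSb hSw hf horth

end FisherRatio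

theorem sqrt_natCast_le_self (m : ℕ) : √(m : ℝ) ≤ m :=
  sqrt_le_self_iff.2 <| mod_cast m.eq_zero_or_pos

/-- If `f¹,…,f^m` are nonzero, pairwise `S_w`-orthogonal vectors whose Fisher ratios are
all at least `θ > 0`, then the sum of the Fisher spectrum,
`∑_k γ_k = tr(S_w⁻¹ S_b)`, is at least `√m · θ`. -/
theorem multiverse_stmt14 {d m : ℕ} (Sb Sw : Matrix (Fin d) (Fin d) ℝ)
    (hSb : Sb.PosDef) (hSw : Sw.PosDef)
    (f : Fin m → Fin d → ℝ) (hf : ∀ r, f r ≠ 0)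
    (horth : ∀ r s : Fin m, r ≠ s → f r ⬝ᵥ (Sw *ᵥ f s) = 0)
    (θ : ℝ) (hθ : 0 < θ)
    (hfish : ∀ r : Fin m, θ ≤ (f r ⬝ᵥ (Sb *ᵥ f r)) / (f r ⬝ᵥ (Sw *ᵥ f r))) :
    Real.sqrt m * θ ≤ (Sw⁻¹ * Sb).trace := by
  have hcard : m * θ ≤ (Sw⁻¹ * Sb).trace := by
    simpa using multiverse_stmt14_general hSb.posSemidef hSw hf (fun r s => horth r s) hfish
  exact (mul_le_mul_of_nonneg_right (sqrt_natCast_le_self m) hθ.le).trans hcard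
end
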